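/- arXiv:1512.01758 — 2 statements merged into one kernel-verified Lean document; each statement's English description precedes it below -/
import Mathlib

section
/- Let V : Ω × ℝ^{dT} → ℝ ∪ {−∞} be a normal integrand market model satisfying the no-arbitrage condition NA, and let f ∈ L^0(𝓕;ℝ) be a random variable. Then the set 𝒜_f = { ϑ ∈ 𝒜 : V(·,ϑ(·)) ≥ f a.s. } of strategies superhedging f is bounded in probability (as a subset of L^0(𝓕;ℝ^{dT})). -/
open MeasureTheory Filter Topology
open scoped ENNReal

noncomputable section

/-- A strategy `ϑ` is adapted to the filtration `ℱ`. -/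
def AdaptedStrat {Ω : Type*} {T d : ℕ} (ℱ : Fin T → MeasurableSpace Ω)
    (ϑ : Ω → Fin T → Fin d → ℝ) : Prop :=
  ∀ t : Fin T, Measurable[ℱ t] fun ω => ϑ ω t

/-- The hypographical correspondence of `V` is closed valued and measurable. -/
def HypoClosedMeas {Ω : Type*} {mΩ : MeasurableSpace Ω} {T d : ℕ}
    (V : Ω → (Fin T → Fin d → ℝ) → EReal) : Prop :=
  (∀ ω, IsClosed {xb : (Fin T → Fin d → ℝ) × ℝ | (xb.2 : EReal) ≤ V ω xb.1}) ∧
  (∀ (c : (Fin T → Fin d → ℝ) × ℝ) (s : ℝ),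
    MeasurableSet {ω | (Metric.ball c s ∩
      {xb : (Fin T → Fin d → ℝ) × ℝ | (xb.2 : EReal) ≤ V ω xb.1}).Nonempty})

/-- The recession market model
`V^∞(ω,z) = lim_{λ→∞} sup { (1/δ)·V(ω,δx) : δ > λ, |x−z| < 1/λ }`; since the inner
supremum is antitone in `λ`, the limit equals the infimum over `λ > 0`. -/
def recessionModel {Ω : Type*} {T d : ℕ} (V : Ω → (Fin T → Fin d → ℝ) → EReal)
    (ω : Ω) (z : Fin T → Fin d → ℝ) : EReal :=
  ⨅ l : {l : ℝ // 0 < l}, ⨆ δ : {δ : ℝ // l.1 < δ},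
    ⨆ x : {x : Fin T → Fin d → ℝ // ‖x - z‖ < 1 / l.1},
      (((δ.1)⁻¹ : ℝ) : EReal) * V ω (δ.1 • x.1)

/-- The no-arbitrage condition NA: the only adapted strategy `ϑ` with
`V^∞(·,ϑ(·)) ≥ 0` a.s. is `ϑ = 0`. -/
def NAcond {Ω : Type*} {mΩ : MeasurableSpace Ω} {T d : ℕ} (P : Measure Ω)
    (ℱ : Fin T → MeasurableSpace Ω) (V : Ω → (Fin T → Fin d → ℝ) → EReal) : Prop :=
  ∀ ϑ, AdaptedStrat ℱ ϑ → (∀ᵐ ω ∂P, 0 ≤ recessionModel V ω (ϑ ω)) →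
    ∀ᵐ ω ∂P, ϑ ω = 0

/-!
It suffices to show that every sequence `ϑ n` of superhedging strategies is almost surely bounded.
Order the coordinates by time. If `ϑ n ω` is unbounded in `n`, then some coordinate `j` tends to
infinity, along a suitable filter of indices `n`, faster than all the coordinates before it. For
the last such `j`, all later coordinates are of order at most `ϑ n ω j` along this filter, so the
normalized sequence `|ϑ n ω j|⁻¹ • ϑ n ω` is bounded, and each of its cluster points `z` is a
recession direction, `V^∞(ω, z) ≥ 0`, with `|z j| = 1`.

The point is to choose `z` adapted. The filter is determined by the coordinates up to `j`, and a
cluster point is obtained by taking upper limits one coordinate at a time, each along the filter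
refined by the earlier choices; hence `z k` is measurable at the time of `k` for every `k ≥ j`,
while `z k = 0` for `k < j`. So NA forbids `j`, and downward induction on `j` excludes every
coordinate.
-/

section MeasurableFilter

variable {Ω β : Type*}

/-- A random filter `F` is measurable if for every measurable random set `p`, the event that `p` is
met frequently along `F` is measurable. For countable `β` this makes upper limits along `F` of
measurable families measurable. -/
def MeasurableFilter [MeasurableSpace Ω] (F : Ω → Filter β) : Prop :=
  ∀ p : Ω → β → Prop, (∀ b, MeasurableSet {ω | p ω b}) → MeasurableSet {ω | ∃ᶠ b in F ω, p ω b}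

theorem frequently_inf_comap_iff {α ι : Type*} {F : Filter β} {G : Filter α} {u : β → α}
    {q : ι → Prop} {s : ι → Set α} (hG : G.HasBasis q s) {p : β → Prop} :
    (∃ᶠ b in F ⊓ comap u G, p b) ↔ ∀ i, q i → ∃ᶠ b in F, u b ∈ s i ∧ p b := by
  simp only [Filter.Frequently, eventually_inf, (hG.comap u).mem_iff, not_iff_comm, not_forall,
    exists_prop, not_not]
  constructor
  · rintro ⟨i, hi, h⟩
    exact ⟨_, h, _, ⟨i, hi, le_rfl⟩, fun b hb hpb => hb.1 ⟨hb.2, hpb⟩⟩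
  · rintro ⟨S, hS, t, ⟨i, hi, hit⟩, h⟩
    exact ⟨i, hi, by filter_upwards [hS] with b hb hp using h b ⟨hb, hit hp.1⟩ hp.2⟩

namespace MeasurableFilter

variable [MeasurableSpace Ω] {F : Ω → Filter β}

theorem top [Countable β] : MeasurableFilter fun _ : Ω => (⊤ : Filter β) := fun p hp => by
  simpa only [frequently_top, Set.ofPred_exists] using MeasurableSet.iUnion hp

theorem inf_comap {α : Type*} [MeasurableSpace α] {G : Filter α} [G.IsCountablyGenerated]
    [G.IsMeasurablyGenerated] (hF : MeasurableFilter F) {u : Ω → β → α}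
    (hu : ∀ b, Measurable fun ω => u ω b) : MeasurableFilter fun ω => F ω ⊓ comap (u ω) G := by
  intro p hp
  obtain ⟨s, hs⟩ := G.exists_antitone_basis
  choose t htG ht hts using fun n => IsMeasurablyGenerated.exists_measurable_subset (hs.mem n)
  have hG : G.HasBasis (fun _ => True) t :=
    hs.toHasBasis.to_hasBasis (fun n _ => ⟨n, trivial, hts n⟩) fun n _ =>
      hs.toHasBasis.mem_iff.1 (htG n)
  simp only [frequently_inf_comap_iff hG, true_imp_iff, Set.ofPred_forall]
  exact MeasurableSet.iInter fun n => hF _ fun b => (hu b (ht n)).inter (hp b)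

theorem inf_comap_nhds {E : Type*} [PseudoMetricSpace E] [SecondCountableTopology E]
    [MeasurableSpace E] [OpensMeasurableSpace E] (hF : MeasurableFilter F) {u : Ω → β → E}
    (hu : ∀ b, Measurable fun ω => u ω b) {z : Ω → E} (hz : Measurable z) :
    MeasurableFilter fun ω => F ω ⊓ comap (u ω) (𝓝 (z ω)) := by
  have hdist (ω : Ω) : comap (u ω) (𝓝 (z ω)) = comap (fun b => dist (u ω b) (z ω)) (𝓝 0) := by
    rw [← nhds_comap_dist (z ω), comap_comap, Function.comp_def]
  simp only [hdist]
  exact hF.inf_comap fun b => (hu b).dist hz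

theorem measurable_limsup {α : Type*} [CompleteLinearOrder α] [DenselyOrdered α]
    [TopologicalSpace α] [OrderTopology α] [SecondCountableTopology α] [MeasurableSpace α]
    [BorelSpace α] (hF : MeasurableFilter F) {u : Ω → β → α}
    (hu : ∀ b, Measurable fun ω => u ω b) :
    Measurable fun ω => limsup (u ω) (F ω) := by
  obtain ⟨D, hDc, hD⟩ := TopologicalSpace.exists_countable_dense α
  refine measurable_of_Ioi fun a => ?_
  have hpre : (fun ω => limsup (u ω) (F ω)) ⁻¹' Set.Ioi a =
      ⋃ q ∈ D ∩ Set.Ioi a, {ω | ∃ᶠ b in F ω, q < u ω b} := by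
    ext ω
    simp only [Set.mem_preimage, Set.mem_Ioi, Set.mem_iUnion, exists_prop]
    constructor
    · intro h
      obtain ⟨q, hq, haq, hqu⟩ := hD.exists_between h
      exact ⟨q, ⟨hq, haq⟩, frequently_lt_of_lt_limsup (h := hqu)⟩
    · rintro ⟨q, ⟨-, haq⟩, hq⟩
      exact haq.trans_le (le_limsup_of_frequently_le (hq.mono fun b hb => hb.le))
  rw [hpre]
  exact .biUnion (hDc.mono Set.inter_subset_left) fun q _ =>
    hF _ fun b => measurableSet_lt measurable_const (hu b)

end MeasurableFilter

end MeasurableFilter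

section LexLimsup

variable {Ω β J : Type*}

theorem mapClusterPt_iff_neBot_inf_comap {X : Type*} [TopologicalSpace X] {F : Filter β}
    {u : β → X} {z : X} : MapClusterPt z F u ↔ (F ⊓ comap u (𝓝 z)).NeBot := by
  rw [MapClusterPt, ClusterPt, neBot_inf_comap_iff_map, inf_comm]

theorem mapClusterPt_toReal_limsup {F : Filter β} [F.NeBot] {u : β → ℝ}
    (hu : IsBoundedUnder (· ≤ ·) F fun b => |u b|) :
    MapClusterPt (limsup (fun b => (u b : EReal)) F).toReal F u := by
  obtain ⟨C, hC⟩ := hu.eventually_le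
  have hle : limsup (fun b => (u b : EReal)) F ≤ (C : EReal) :=
    limsup_le_of_le (h := hC.mono fun b hb => EReal.coe_le_coe ((le_abs_self _).trans hb))
  have hge : ((-C : ℝ) : EReal) ≤ limsup (fun b => (u b : EReal)) F :=
    le_limsup_of_frequently_le
      (hC.mono fun b hb => EReal.coe_le_coe (neg_le_of_abs_le hb)).frequently
  have hcoe := EReal.coe_toReal (ne_top_of_le_ne_top (EReal.coe_ne_top _) hle)
    (ne_bot_of_le_ne_bot (EReal.coe_ne_bot _) hge)
  rw [MapClusterPt, ← EReal.isEmbedding_coe.isInducing.mapClusterPt_iff, hcoe]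
  exact MapClusterPt.limsup

variable [LinearOrder J]

/-- The lexicographic upper limit of `y` along `F`: coordinate `k` is the upper limit of `y · k`
along the refinement of `F` on which the coordinates before `k` tend to the values already chosen.
Along a nontrivial filter on which `y` is bounded it is a cluster point, and it depends measurably
on `F` and `y`. The upper limits are taken in `EReal`, so that the value is `0` along `⊥`. -/
def lexLimsup [WellFoundedLT J] (F : Filter β) (y : β → J → ℝ) (k : J) : ℝ :=
  (limsup (fun b => (y b k : EReal))
    (F ⊓ comap (fun b (i : Set.Iio k) => y b i) (𝓝 fun i => lexLimsup F y i))).toReal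
termination_by wellFounded_lt.wrap k
decreasing_by exact i.2

theorem lexLimsup_bot [WellFoundedLT J] (y : β → J → ℝ) : lexLimsup ⊥ y = 0 := by
  ext k
  rw [lexLimsup, bot_inf_eq, limsup_bot, EReal.toReal_bot, Pi.zero_apply]

variable {F : Filter β} {y : β → J → ℝ}

theorem lexLimsup_eq_zero_of_tendsto [WellFoundedLT J] {k : J}
    (h : Tendsto (fun b => y b k) F (𝓝 0)) : lexLimsup F y k = 0 := by
  rw [lexLimsup]
  set F' := F ⊓ comap (fun b (i : Set.Iio k) => y b i) (𝓝 fun i => lexLimsup F y i)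
  rcases F'.eq_or_neBot with hF' | _
  · rw [hF', limsup_bot, EReal.toReal_bot]
  · rw [(EReal.tendsto_coe.2 (h.mono_left inf_le_left)).limsup_eq, EReal.toReal_coe]

variable [Finite J]

theorem mapClusterPt_lexLimsup [F.NeBot] (hy : ∀ k, IsBoundedUnder (· ≤ ·) F fun b => |y b k|) :
    MapClusterPt (lexLimsup F y) F y := by
  have comap_nhds_restrict (S : Set J) :
      comap (fun b (i : S) => y b i) (𝓝 fun i : S => lexLimsup F y i) =
        ⨅ i ∈ S, comap (fun b => y b i) (𝓝 (lexLimsup F y i)) := by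
    simp only [nhds_pi, Filter.pi, comap_iInf, comap_comap, Function.comp_def, iInf_subtype']
  have neBot_of_isLowerSet (S : Finset J) (hS : IsLowerSet (S : Set J)) :
      (F ⊓ ⨅ i ∈ (S : Set J), comap (fun b => y b i) (𝓝 (lexLimsup F y i))).NeBot := by
    induction S using Finset.induction_on_max with
    | empty => simpa
    | insert a S hlt ih =>
      have hSa : (S : Set J) = Set.Iio a := by
        refine Set.Subset.antisymm hlt fun i (hi : i < a) => ?_
        exact (Finset.mem_insert.1 (hS hi.le (Finset.mem_insert_self a S))).resolve_left hi.ne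
      have hF' := ih (hSa ▸ isLowerSet_Iio a)
      rw [hSa, ← comap_nhds_restrict] at hF'
      rw [Finset.coe_insert, iInf_insert, inf_comm (comap _ _), ← inf_assoc, hSa,
        ← comap_nhds_restrict, ← mapClusterPt_iff_neBot_inf_comap, lexLimsup]
      exact mapClusterPt_toReal_limsup ((hy a).mono inf_le_left)
  have := Fintype.ofFinite J
  have h := neBot_of_isLowerSet Finset.univ
    (by simpa only [Finset.coe_univ] using isLowerSet_univ)
  rw [mapClusterPt_iff_neBot_inf_comap, nhds_pi]
  simpa only [Filter.pi, comap_iInf, comap_comap, Function.comp_def, Finset.coe_univ,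
    Set.mem_univ, iInf_true] using h

theorem measurable_lexLimsup [MeasurableSpace Ω] {F : Ω → Filter β} (hF : MeasurableFilter F)
    {y : Ω → β → J → ℝ} {k : J} (hy : ∀ i ≤ k, ∀ b, Measurable fun ω => y ω b i) :
    Measurable fun ω => lexLimsup (F ω) (y ω) k := by
  induction k using WellFoundedLT.induction with
  | ind k ih =>
    have := Fintype.ofFinite (Set.Iio k)
    unfold lexLimsup
    refine ((hF.inf_comap_nhds ?_ ?_).measurable_limsup ?_).ereal_toReal
    · exact fun b => measurable_pi_lambda _ fun i => hy i i.2.le b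
    · exact measurable_pi_lambda _ fun i => ih i i.2 fun l hl => hy l (hl.trans i.2.le)
    · exact fun b => (hy k le_rfl b).coe_real_ereal

end LexLimsup

section AsymptoticCone

variable {β E E' : Type*} [AddCommGroup E] [Module ℝ E] [TopologicalSpace E]
  [IsTopologicalAddGroup E] [ContinuousSMul ℝ E]

theorem mem_asymptoticCone_range_of_mapClusterPt {F : Filter β} {r : β → ℝ} {x : β → E} {z : E}
    (hr : Tendsto r F atTop) (hz : MapClusterPt z F fun b => (r b)⁻¹ • x b) :
    z ∈ asymptoticCone ℝ (Set.range x) := by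
  rw [mapClusterPt_iff_neBot_inf_comap] at hz
  set F' := F ⊓ comap (fun b => (r b)⁻¹ • x b) (𝓝 z)
  have hr' : Tendsto r F' atTop := hr.mono_left inf_le_left
  have hx : Tendsto (fun b => r b • (r b)⁻¹ • x b) F' (AffineSpace.asymptoticNhds ℝ E z) :=
    hr'.atTop_smul_nhds_tendsto_asymptoticNhds (tendsto_comap.mono_left inf_le_right)
  refine hx.frequently (Eventually.frequently ?_)
  filter_upwards [hr'.eventually_ne_atTop 0] with b hb
  exact ⟨b, (smul_inv_smul₀ hb (x b)).symm⟩

theorem map_mem_asymptoticCone_image [AddCommGroup E'] [Module ℝ E'] [TopologicalSpace E']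
    [IsTopologicalAddGroup E'] [ContinuousSMul ℝ E'] (L : E →L[ℝ] E') {s : Set E} {z : E}
    (hz : z ∈ asymptoticCone ℝ s) : L z ∈ asymptoticCone ℝ (L '' s) := by
  have hL : Tendsto L (AffineSpace.asymptoticNhds ℝ E z)
      (AffineSpace.asymptoticNhds ℝ E' (L z)) := by
    simp only [AffineSpace.asymptoticNhds_eq_smul, Tendsto, ← map₂_smul]
    rw [map_map₂_distrib_right (map_smul L)]
    exact map₂_mono_left (L.continuous.tendsto z)
  exact hL.frequently (hz.mono fun p hp => ⟨p, hp, rfl⟩)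

end AsymptoticCone

section BlowUp

variable {Ω β J : Type*}

/-- The family `x` rescaled by the size of its `j`-th coordinate, so that its cluster points are the
directions in which `x` blows up with coordinate `j`; it is `0` wherever `x b j = 0`. -/
def normalized (x : β → J → ℝ) (j : J) (b : β) : J → ℝ := |x b j|⁻¹ • x b

variable [LinearOrder J]

/-- The coarsest filter along which coordinate `j` of `x` tends to infinity and dominates all
earlier coordinates. It is nontrivial exactly when coordinate `j` can blow up in this way. -/
def blowUpFilter (x : β → J → ℝ) (j : J) : Filter β :=
  comap (fun b => |x b j|) atTop ⊓ comap (fun b (i : Set.Iio j) => normalized x j b i) (𝓝 0)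

theorem le_blowUpFilter_iff {F : Filter β} {x : β → J → ℝ} {j : J} :
    F ≤ blowUpFilter x j ↔ Tendsto (fun b => |x b j|) F atTop ∧
      ∀ i < j, (fun b => x b i) =o[F] fun b => x b j := by
  rw [blowUpFilter, le_inf_iff, ← tendsto_iff_comap, ← tendsto_iff_comap]
  refine and_congr_right fun h => ?_
  have hne : ∀ᶠ b in F, x b j ≠ 0 := (h.eventually_gt_atTop 0).mono fun b => abs_pos.1
  simp only [tendsto_pi_nhds, Subtype.forall, Set.mem_Iio, Pi.zero_apply]
  refine forall₂_congr fun i _ => ?_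
  rw [← Asymptotics.isLittleO_abs_right, Asymptotics.isLittleO_iff_tendsto']
  · simp only [normalized, Pi.smul_apply, smul_eq_mul, inv_mul_eq_div]
  · exact hne.mono fun b hb h0 => absurd (abs_eq_zero.1 h0) hb

theorem measurableFilter_blowUpFilter [MeasurableSpace Ω] [Countable β] [Countable J]
    {X : Ω → β → J → ℝ} {j : J} (hX : ∀ i ≤ j, ∀ b, Measurable fun ω => X ω b i) :
    MeasurableFilter fun ω => blowUpFilter (X ω) j := by
  have hsize : MeasurableFilter fun ω => comap (fun b => |X ω b j|) (atTop : Filter ℝ) := by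
    simpa only [top_inf_eq] using MeasurableFilter.top.inf_comap fun b => (hX j le_rfl b).abs
  refine hsize.inf_comap fun b => measurable_pi_lambda _ fun i => ?_
  exact (hX j le_rfl b).abs.inv.mul (hX i i.2.le b)

variable {x : β → J → ℝ} {j k : J}

theorem isBigO_of_blowUpFilter_eq_bot {F : Filter β} {r : β → ℝ} (hk : blowUpFilter x k = ⊥)
    (hr : (fun _ => (1 : ℝ)) =O[F] r) (hlt : ∀ i < k, (fun b => x b i) =O[F] r) :
    (fun b => x b k) =O[F] r := by
  have hr0 : ∀ᶠ b in F, r b ≠ 0 := hr.eq_zero_imp.mono fun b hb h0 => one_ne_zero (hb h0)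
  by_contra hunbdd
  rw [Asymptotics.isBigO_iff_isBoundedUnder_le_div hr0] at hunbdd
  have hne : (F ⊓ comap (fun b => ‖x b k‖ / ‖r b‖) atTop).NeBot := by
    rw [← frequently_true_iff_neBot, frequently_inf_comap_iff atTop_basis_Ioi]
    exact fun C _ hC => hunbdd (isBoundedUnder_of_eventually_le (a := C)
      (hC.mono fun b hb => not_lt.1 fun hlt => hb ⟨hlt, trivial⟩))
  set F' := F ⊓ comap (fun b => ‖x b k‖ / ‖r b‖) atTop
  have hF' : F' ≤ F := inf_le_left
  have hrx : r =o[F'] fun b => x b k := by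
    have h1 : (fun _ => (1 : ℝ)) =o[F'] fun b => x b k / r b := by
      simpa only [Asymptotics.isLittleO_one_left_iff, norm_div] using
        tendsto_comap.mono_left inf_le_right
    refine (h1.mul_isBigO (Asymptotics.isBigO_refl r F')).congr'
      (.of_eq (funext fun b => one_mul (r b))) ?_
    exact (hr0.filter_mono hF').mono fun b hb => div_mul_cancel₀ _ hb
  refine hne.ne (le_bot_iff.1 (hk ▸ le_blowUpFilter_iff.2 ⟨?_, fun i hi => ?_⟩))
  · exact (Asymptotics.isLittleO_one_left_iff ℝ).1 ((hr.mono hF').trans_isLittleO hrx)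
  · exact ((hlt i hi).mono hF').trans_isLittleO hrx

theorem isBigO_of_forall_blowUpFilter [WellFoundedLT J] {F : Filter β} {r : β → ℝ}
    (hr : (fun _ => (1 : ℝ)) =O[F] r)
    (h : ∀ k, blowUpFilter x k ≠ ⊥ → (fun b => x b k) =O[F] r) (k : J) :
    (fun b => x b k) =O[F] r := by
  induction k using WellFoundedLT.induction with
  | ind k ih => exact (eq_or_ne _ _).elim (isBigO_of_blowUpFilter_eq_bot · hr ih) (h k)

theorem isBounded_range_of_blowUpFilter_eq_bot [WellFoundedLT J]
    (h : ∀ k, blowUpFilter x k = ⊥) :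
    Bornology.IsBounded (Set.range x) := by
  refine Bornology.forall_isBounded_image_eval_iff.1 fun k => ?_
  have hO := isBigO_of_forall_blowUpFilter (F := ⊤) (Asymptotics.isBigO_refl (fun _ => (1 : ℝ)) ⊤)
    (fun k hk => absurd (h k) hk) k
  obtain ⟨C, hC⟩ := Asymptotics.isBigO_top.1 hO
  rw [← Set.range_comp]
  exact isBounded_iff_forall_norm_le.2 ⟨C, Set.forall_mem_range.2 fun b => by simpa using hC b⟩

theorem lexLimsup_normalized_eq_zero_of_lt [WellFoundedLT J] (hk : k < j) :
    lexLimsup (blowUpFilter x j) (normalized x j) k = 0 := by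
  have h : Tendsto (fun b (i : Set.Iio j) => normalized x j b i) (blowUpFilter x j) (𝓝 0) :=
    tendsto_iff_comap.2 inf_le_right
  exact lexLimsup_eq_zero_of_tendsto (tendsto_pi_nhds.1 h ⟨k, hk⟩)

variable [Finite J]

theorem mapClusterPt_lexLimsup_normalized [(blowUpFilter x j).NeBot]
    (hj : ∀ k > j, blowUpFilter x k = ⊥) :
    MapClusterPt (lexLimsup (blowUpFilter x j) (normalized x j)) (blowUpFilter x j)
      (normalized x j) := by
  have ⟨hsize, hlt⟩ := le_blowUpFilter_iff.1 (le_refl (blowUpFilter x j))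
  refine mapClusterPt_lexLimsup fun k => ?_
  have hO : (fun b => x b k) =O[blowUpFilter x j] fun b => x b j := by
    refine isBigO_of_forall_blowUpFilter ?_ (fun k hk => ?_) k
    · exact ((Asymptotics.isLittleO_one_left_iff ℝ).2 hsize).isBigO
    · rcases (le_of_not_gt (mt (hj k) hk)).eq_or_lt with rfl | hkj
      · exact Asymptotics.isBigO_refl _ _
      · exact (hlt k hkj).isBigO
  simpa only [normalized, Pi.smul_apply, smul_eq_mul, inv_mul_eq_div, norm_div, abs_div, abs_abs,
    Real.norm_eq_abs] using Asymptotics.div_isBoundedUnder_of_isBigO hO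

theorem abs_lexLimsup_normalized_self [(blowUpFilter x j).NeBot]
    (hj : ∀ k > j, blowUpFilter x k = ⊥) :
    |lexLimsup (blowUpFilter x j) (normalized x j) j| = 1 := by
  have hsize := (le_blowUpFilter_iff.1 (le_refl (blowUpFilter x j))).1
  have hclosed : IsClosed {z : J → ℝ | |z j| = 1} :=
    isClosed_eq (continuous_apply j).abs continuous_const
  refine hclosed.mem_of_mapClusterPt (mapClusterPt_lexLimsup_normalized hj) ?_
  filter_upwards [hsize.eventually_gt_atTop 0] with b hb
  simp only [normalized, Pi.smul_apply, smul_eq_mul, abs_mul, abs_inv, abs_abs,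
    inv_mul_cancel₀ hb.ne']

theorem lexLimsup_normalized_mem_asymptoticCone [(blowUpFilter x j).NeBot]
    (hj : ∀ k > j, blowUpFilter x k = ⊥) :
    lexLimsup (blowUpFilter x j) (normalized x j) ∈ asymptoticCone ℝ (Set.range x) :=
  mem_asymptoticCone_range_of_mapClusterPt (le_blowUpFilter_iff.1 le_rfl).1
    (mapClusterPt_lexLimsup_normalized hj)

theorem measurable_lexLimsup_normalized [Countable β] {G : J → MeasurableSpace Ω}
    (hG : Monotone G) {X : Ω → β → J → ℝ} (hX : ∀ b k, Measurable[G k] fun ω => X ω b k) (j k : J) :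
    Measurable[G k] fun ω => lexLimsup (blowUpFilter (X ω) j) (normalized (X ω) j) k := by
  rcases lt_or_ge k j with hkj | hjk
  · simp only [lexLimsup_normalized_eq_zero_of_lt hkj, measurable_const]
  · let _ := G k
    have hX' : ∀ i ≤ k, ∀ b, Measurable fun ω => X ω b i := fun i hi b =>
      (hX b i).mono (hG hi) le_rfl
    refine measurable_lexLimsup (measurableFilter_blowUpFilter fun i hi => hX' i (hi.trans hjk)) ?_
    exact fun i hi b => (hX' j hjk b).abs.inv.mul (hX' i hi b)

theorem ae_isBounded_range_of_asymptoticCone [Countable β] [Nonempty β]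
    {mΩ : MeasurableSpace Ω} {P : Measure Ω} {G : J → MeasurableSpace Ω} (hG : Monotone G)
    {X : Ω → β → J → ℝ} (hX : ∀ b k, Measurable[G k] fun ω => X ω b k)
    (hcone : ∀ Z : Ω → J → ℝ, (∀ k, Measurable[G k] fun ω => Z ω k) →
      (∀ᵐ ω ∂P, Z ω ∈ asymptoticCone ℝ (Set.range (X ω))) → ∀ᵐ ω ∂P, Z ω = 0) :
    ∀ᵐ ω ∂P, Bornology.IsBounded (Set.range (X ω)) := by
  have hbot (j : J) : ∀ᵐ ω ∂P, blowUpFilter (X ω) j = ⊥ := by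
    induction j using WellFoundedGT.induction with
    | ind j ih =>
      have hlater : ∀ᵐ ω ∂P, ∀ k > j, blowUpFilter (X ω) k = ⊥ :=
        ae_all_iff.2 fun k => ae_all_iff.2 (ih k)
      have hzero := hcone (fun ω => lexLimsup (blowUpFilter (X ω) j) (normalized (X ω) j))
        (measurable_lexLimsup_normalized hG hX j) ?_
      · filter_upwards [hlater, hzero] with ω hlater hzero
        by_contra hne
        have : (blowUpFilter (X ω) j).NeBot := ⟨hne⟩
        simpa [hzero] using abs_lexLimsup_normalized_self hlater
      · filter_upwards [hlater] with ω hlater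
        rcases (blowUpFilter (X ω) j).eq_or_neBot with hbot | _
        · rw [hbot, lexLimsup_bot]
          exact zero_mem_asymptoticCone.2 (Set.range_nonempty _)
        · exact lexLimsup_normalized_mem_asymptoticCone hlater
  filter_upwards [ae_all_iff.2 hbot] with ω hω using isBounded_range_of_blowUpFilter_eq_bot hω

end BlowUp

section RecessionModel

variable {Ω : Type*} {T d : ℕ} {V : Ω → (Fin T → Fin d → ℝ) → EReal}

theorem recessionModel_nonneg_of_mem_asymptoticCone {ω : Ω} {c : ℝ} {z : Fin T → Fin d → ℝ}
    (hz : z ∈ asymptoticCone ℝ {y | (c : EReal) ≤ V ω y}) : 0 ≤ recessionModel V ω z := by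
  rw [mem_asymptoticCone_iff, AffineSpace.asymptoticNhds_eq_smul] at hz
  refine le_iInf fun ⟨l, hl⟩ => EReal.ge_of_forall_gt_iff_ge.1 fun a ha => ?_
  have hca : ∀ᶠ δ : ℝ in atTop, a < c / δ :=
    (tendsto_const_nhds.div_atTop tendsto_id).eventually_const_lt (EReal.coe_neg'.1 ha)
  have hδ : ∀ᶠ δ in atTop, l < δ ∧ a < c / δ := (eventually_gt_atTop l).and hca
  have hx : ∀ᶠ x in 𝓝 z, ‖x - z‖ < 1 / l := by
    filter_upwards [Metric.ball_mem_nhds z (one_div_pos.2 hl)] with x using mem_ball_iff_norm.1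
  obtain ⟨_, hV, δ, ⟨hlδ, haδ⟩, x, hxz, rfl⟩ :=
    (hz.and_eventually (smul_mem_smul hδ hx)).exists
  have hδ0 : 0 < δ := hl.trans hlδ
  refine le_iSup_of_le ⟨δ, hlδ⟩ (le_iSup_of_le ⟨x, hxz⟩ ?_)
  calc (a : EReal) ≤ ((δ⁻¹ * c : ℝ) : EReal) := by
        rw [inv_mul_eq_div]
        exact EReal.coe_le_coe haδ.le
    _ = (δ⁻¹ : ℝ) * (c : EReal) := EReal.coe_mul _ _
    _ ≤ (δ⁻¹ : ℝ) * V ω (δ • x) :=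
        mul_le_mul_of_nonneg_left hV (EReal.coe_nonneg.2 (inv_nonneg.2 hδ0.le))

theorem ae_isBounded_range_of_superhedging {mΩ : MeasurableSpace Ω} {P : Measure Ω}
    {ℱ : Fin T → MeasurableSpace Ω} (hℱ : Monotone ℱ) (hNA : NAcond P ℱ V) {f : Ω → ℝ}
    {β : Type*} [Countable β] [Nonempty β] {ϑ : β → Ω → Fin T → Fin d → ℝ}
    (hϑ : ∀ b, AdaptedStrat ℱ (ϑ b)) (hf : ∀ b, ∀ᵐ ω ∂P, (f ω : EReal) ≤ V ω (ϑ b ω)) :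
    ∀ᵐ ω ∂P, Bornology.IsBounded (Set.range fun b => ϑ b ω) := by
  let L : (Fin T ×ₗ Fin d → ℝ) →L[ℝ] Fin T → Fin d → ℝ :=
    .pi fun t => .pi fun i => .proj (toLex (t, i))
  let X (ω : Ω) (b : β) (k : Fin T ×ₗ Fin d) : ℝ := ϑ b ω (ofLex k).1 (ofLex k).2
  have hLX (ω : Ω) : L '' Set.range (X ω) = Set.range fun b => ϑ b ω := (Set.range_comp _ _).symm
  have hX (b : β) (k : Fin T ×ₗ Fin d) : Measurable[ℱ (ofLex k).1] fun ω => X ω b k :=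
    (measurable_pi_apply _).comp (hϑ b (ofLex k).1)
  have hbdd := ae_isBounded_range_of_asymptoticCone (P := P)
    (hℱ.comp Prod.Lex.monotone_fst_ofLex) hX fun Z hZ hcone => ?_
  · filter_upwards [hbdd] with ω hω
    rw [← hLX]
    exact L.lipschitz.isBounded_image hω
  · have hrec : ∀ᵐ ω ∂P, 0 ≤ recessionModel V ω (L (Z ω)) := by
      filter_upwards [hcone, ae_all_iff.2 hf] with ω hω hfω
      refine recessionModel_nonneg_of_mem_asymptoticCone (c := f ω) ?_
      refine asymptoticCone_mono ?_ (map_mem_asymptoticCone_image L hω)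
      exact hLX ω ▸ Set.range_subset_iff.2 hfω
    have hLZ : AdaptedStrat ℱ fun ω => L (Z ω) := fun t =>
      @measurable_pi_lambda _ _ _ (ℱ t) _ _ fun i => hZ (toLex (t, i))
    filter_upwards [hNA _ hLZ hrec] with ω hω
    exact funext fun k => congrFun₂ hω (ofLex k).1 (ofLex k).2

end RecessionModel

theorem exists_forall_measure_norm_ge_lt {Ω E : Type*} {mΩ : MeasurableSpace Ω} {P : Measure Ω}
    [IsFiniteMeasure P] [NormedAddCommGroup E] [MeasurableSpace E] [OpensMeasurableSpace E]
    {S : Set (Ω → E)} (hS : ∀ g ∈ S, Measurable g)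
    (hbdd : ∀ g : ℕ → Ω → E, (∀ n, g n ∈ S) →
      ∀ᵐ ω ∂P, Bornology.IsBounded (Set.range fun n => g n ω))
    {ε : ℝ≥0∞} (hε : 0 < ε) :
    ∃ M : ℝ, 0 < M ∧ ∀ g ∈ S, P {ω | M ≤ ‖g ω‖} < ε := by
  by_contra! hcon
  choose! g hgS hgε using fun n : ℕ => hcon (n + 1) (by positivity)
  have hlim : Tendsto (fun n : ℕ => P {ω | (n : ℝ) + 1 ≤ ‖g n ω‖}) atTop (𝓝 (P ∅)) := by
    refine tendsto_measure_of_ae_tendsto_indicator_of_isFiniteMeasure atTop .empty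
      (fun n => measurableSet_le measurable_const (hS _ (hgS n)).norm) ?_
    filter_upwards [hbdd g hgS] with ω hω
    obtain ⟨M, hM⟩ := hω.exists_norm_le
    filter_upwards [eventually_ge_atTop ⌈M⌉₊] with n hn
    have hlt : ‖g n ω‖ < n + 1 :=
      ((hM _ ⟨n, rfl⟩).trans (Nat.ceil_le.1 hn)).trans_lt (lt_add_one _)
    exact iff_of_false hlt.not_ge (Set.notMem_empty ω)
  rw [measure_empty] at hlim
  exact hε.not_ge (ge_of_tendsto' hlim hgε)

theorem stmt7_general {Ω : Type*} {mΩ : MeasurableSpace Ω} (P : Measure Ω) [IsFiniteMeasure P]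
    {T d : ℕ} {ℱ : Fin T → MeasurableSpace Ω} (hℱmono : Monotone ℱ) (hℱle : ∀ t, ℱ t ≤ mΩ)
    {V : Ω → (Fin T → Fin d → ℝ) → EReal} (hNA : NAcond P ℱ V) (f : Ω → ℝ)
    {ε : ℝ} (hε : 0 < ε) :
    ∃ M : ℝ, 0 < M ∧ ∀ ϑ, AdaptedStrat ℱ ϑ → (∀ᵐ ω ∂P, (f ω : EReal) ≤ V ω (ϑ ω)) →
      P {ω | M ≤ ‖ϑ ω‖} < ENNReal.ofReal ε := by
  let 𝒜 : Set (Ω → Fin T → Fin d → ℝ) :=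
    {ϑ | AdaptedStrat ℱ ϑ ∧ ∀ᵐ ω ∂P, (f ω : EReal) ≤ V ω (ϑ ω)}
  have hmeas : ∀ ϑ ∈ 𝒜, Measurable ϑ := fun ϑ hϑ =>
    measurable_pi_lambda _ fun t => (hϑ.1 t).mono (hℱle t) le_rfl
  obtain ⟨M, hM, h⟩ := exists_forall_measure_norm_ge_lt hmeas
    (fun ϑ hϑ => ae_isBounded_range_of_superhedging hℱmono hNA (fun n => (hϑ n).1)
      fun n => (hϑ n).2) (ENNReal.ofReal_pos.2 hε)
  exact ⟨M, hM, fun ϑ hϑ hϑf => h ϑ ⟨hϑ, hϑf⟩⟩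

/-- for a normal integrand market model satisfying NA and a random
variable `f`, the set `𝒜_f` of superhedging strategies is bounded in probability. -/
theorem stmt7 {Ω : Type*} {mΩ : MeasurableSpace Ω} (P : Measure Ω) [IsProbabilityMeasure P]
    (T d : ℕ) (hT : 1 ≤ T) (hd : 1 ≤ d)
    (ℱ : Fin T → MeasurableSpace Ω) (hℱmono : Monotone ℱ) (hℱle : ∀ t, ℱ t ≤ mΩ)
    -- V is a normal integrand market model:
    (V : Ω → (Fin T → Fin d → ℝ) → EReal)
    (hVjm : Measurable (Function.uncurry V))
    (hV0 : ∀ᵐ ω ∂P, V ω 0 = 0)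
    (hVnotTop : ∀ ω x, V ω x ≠ ⊤)
    (hVusc : ∀ᵐ ω ∂P, UpperSemicontinuous (V ω))
    (hVhypo : HypoClosedMeas (mΩ := mΩ) V)
    -- satisfying the no-arbitrage condition:
    (hNA : NAcond P ℱ V)
    (f : Ω → ℝ) (hf : Measurable f) :
    -- 𝒜_f is bounded in probability (as a subset of L^0(𝓕;ℝ^{dT}))
    ∀ ε : ℝ, 0 < ε → ∃ M : ℝ, 0 < M ∧
      ∀ ϑ, AdaptedStrat ℱ ϑ → (∀ᵐ ω ∂P, (f ω : EReal) ≤ V ω (ϑ ω)) →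
        P {ω | M ≤ ‖ϑ ω‖} < ENNReal.ofReal ε := by
  exact fun ε hε => stmt7_general P hℱmono hℱle hNA f hε

end
end

section
/- Let (ϑ^n) ⊆ 𝒜 be a sequence of adapted strategies that is bounded in probability. Then there exists a strictly increasing sequence of 𝓕-measurable random indices τ(n) : Ω → ℕ such that, for each t ∈ {0,…,T−1}, τ(n) can be chosen so that ω ↦ ϑ^{τ(n)(ω)}(ω) converges almost surely to an adapted strategy ϑ ∈ 𝒜 (i.e. the t-th component of the limit is 𝓕_t-measurable for every t). -/
open MeasureTheory Filter Topology
open scoped ENNReal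

noncomputable section

/-!
Boundedness in probability is not stable under random reindexing, so it is first traded for
integrals: there are functions `φ t` tending to `∞` such that `Z k = ∑ t, φ t ‖X k t‖` has bounded
expectation. Since `E[Z (σ ·) | 𝓕] = E[Z k | 𝓕]` on `{σ = k}` for an `𝓕`-measurable index `σ`,
almost sure boundedness of the sequence `E[Z k | 𝓕]` survives `𝓕`-measurable reindexing. By the
lemma of Fatou it carries over to a larger σ-algebra `𝓖`: the lower limit of `E[Z k | 𝓖]` is almost
surely finite, and a `𝓖`-measurable random subsequence stays below it plus one. Boundedness of
`E[Z k | 𝓖]` makes every `𝓖`-measurable component dominated by `Z` almost surely bounded, and a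
random Bolzano–Weierstrass theorem extracts a convergent subsequence. Proceeding along the
filtration and diagonalizing gives the result.
-/

/-- A random subsequence: a strictly increasing sequence of `m`-measurable random indices. -/
structure IsRandomSubseq {Ω : Type*} (m : MeasurableSpace Ω) (τ : ℕ → Ω → ℕ) : Prop where
  measurable : ∀ k, Measurable[m] (τ k)
  strictMono : ∀ ω, StrictMono fun k => τ k ω

section RandomIndex

variable {Ω E : Type*} {m : MeasurableSpace Ω}

theorem measurable_apply_index [MeasurableSpace E] {Y : ℕ → Ω → E} (hY : ∀ k, Measurable (Y k))
    {σ : Ω → ℕ} (hσ : Measurable σ) : Measurable fun ω => Y (σ ω) ω :=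
  (measurable_from_prod_countable_left (f := fun p : Ω × ℕ => Y p.2 p.1) hY).comp
    (measurable_id.prodMk hσ)

namespace IsRandomSubseq

variable {τ ρ : ℕ → Ω → ℕ}

theorem id (m : MeasurableSpace Ω) : IsRandomSubseq m fun k _ => k :=
  ⟨fun _ => measurable_const, fun _ => strictMono_id⟩

theorem mono {m₁ m₂ : MeasurableSpace Ω} (hτ : IsRandomSubseq m₁ τ) (h : m₁ ≤ m₂) :
    IsRandomSubseq m₂ τ :=
  ⟨fun k => (hτ.measurable k).mono h le_rfl, hτ.strictMono⟩

theorem comp (hτ : IsRandomSubseq m τ) (hρ : IsRandomSubseq m ρ) :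
    IsRandomSubseq m fun k ω => τ (ρ k ω) ω :=
  ⟨fun k => measurable_apply_index hτ.measurable (hρ.measurable k),
    fun ω => (hτ.strictMono ω).comp (hρ.strictMono ω)⟩

theorem tendsto_atTop (hτ : IsRandomSubseq m τ) (ω : Ω) : Tendsto (fun k => τ k ω) atTop atTop :=
  (hτ.strictMono ω).tendsto_atTop

theorem exists_forall_of_frequently {p : ℕ → ℕ → Ω → Prop}
    (hp : ∀ n k, MeasurableSet {ω | p n k ω}) (hfreq : ∀ n ω, ∃ᶠ k in atTop, p n k ω) :
    ∃ τ, IsRandomSubseq m τ ∧ ∀ n ω, p n (τ n ω) ω := by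
  classical
  have hex : ∀ n N ω, ∃ k, N < k ∧ p n k ω := fun n N ω =>
    (frequently_atTop.1 (hfreq n ω) (N + 1)).imp fun _ h => h
  let next (n : ℕ) (σ : Ω → ℕ) (ω : Ω) : ℕ := Nat.find (hex n (σ ω) ω)
  have next_spec : ∀ n σ ω, σ ω < next n σ ω ∧ p n (next n σ ω) ω := fun n σ ω =>
    Nat.find_spec (hex n (σ ω) ω)
  have measurable_next : ∀ n σ, Measurable σ → Measurable (next n σ) := fun n σ hσ =>
    measurable_find _ fun k => (measurableSet_lt hσ measurable_const).inter (hp n k)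
  let τ : ℕ → Ω → ℕ := Nat.rec (next 0 fun _ => 0) fun n σ => next (n + 1) σ
  refine ⟨τ, ⟨fun n => ?_, fun ω => strictMono_nat_of_lt_succ fun n =>
    (next_spec (n + 1) (τ n) ω).1⟩, fun n ω => ?_⟩
  · induction n with
    | zero => exact measurable_next _ _ measurable_const
    | succ n ih => exact measurable_next _ _ ih
  · cases n with
    | zero => exact (next_spec 0 (fun _ => 0) ω).2
    | succ n => exact (next_spec (n + 1) (τ n) ω).2

theorem exists_forall_mem_range {τ : ℕ → ℕ → Ω → ℕ} (hτ : ∀ n, IsRandomSubseq m (τ n))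
    (hrange : ∀ ω, Antitone fun n => Set.range fun k => τ n k ω) :
    ∃ σ, IsRandomSubseq m σ ∧ ∀ n ω, ∀ k ≥ n, σ k ω ∈ Set.range fun j => τ n j ω := by
  obtain ⟨σ, hσ, hστ⟩ := exists_forall_of_frequently (m := m)
    (p := fun n k ω => k ∈ Set.range fun j => τ n j ω)
    (fun n k => by
      simp only [Set.mem_range, Set.ofPred_exists]
      exact .iUnion fun j => (hτ n).measurable j (measurableSet_singleton k))
    fun n ω => ((hτ n).tendsto_atTop ω).frequently (.of_forall fun j => ⟨j, rfl⟩)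
  exact ⟨σ, hσ, fun n ω k hk => hrange ω hk (hστ k ω)⟩

theorem exists_diagonal {m : ℕ → MeasurableSpace Ω} (hm : Monotone m)
    {Q : ℕ → (ℕ → Ω → ℕ) → Prop} (h_zero : ∃ τ, IsRandomSubseq (m 0) τ ∧ Q 0 τ)
    (h_succ : ∀ n τ, IsRandomSubseq (m n) τ → Q n τ →
      ∃ ρ, IsRandomSubseq (m (n + 1)) ρ ∧ Q (n + 1) fun k ω => τ (ρ k ω) ω) :
    ∃ σ, IsRandomSubseq (⨆ n, m n) σ ∧ ∀ n, ∃ τ, IsRandomSubseq (m n) τ ∧ Q n τ ∧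
      ∀ ω, ∀ k ≥ n, σ k ω ∈ Set.range fun j => τ j ω := by
  obtain ⟨τ₀, hτ₀⟩ := h_zero
  choose! ρ hρ hQ using h_succ
  let τ : ℕ → ℕ → Ω → ℕ := Nat.rec τ₀ fun n τ k ω => τ (ρ n τ k ω) ω
  have hτ : ∀ n, IsRandomSubseq (m n) (τ n) ∧ Q n (τ n) := by
    intro n
    induction n with
    | zero => exact hτ₀
    | succ n ih =>
      exact ⟨(ih.1.mono (hm n.le_succ)).comp (hρ n _ ih.1 ih.2), hQ n _ ih.1 ih.2⟩
  obtain ⟨σ, hσ, hστ⟩ := exists_forall_mem_range (fun n => (hτ n).1.mono (le_iSup m n))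
    fun ω => antitone_nat_of_succ_le fun n => Set.range_subset_iff.2 fun k =>
      ⟨ρ n (τ n) k ω, rfl⟩
  exact ⟨σ, hσ, fun n => ⟨τ n, (hτ n).1, (hτ n).2, hστ n⟩⟩

end IsRandomSubseq

end RandomIndex

theorem tendsto_map_atTop_of_eventually_mem_range {f g : ℕ → ℕ} (hf : StrictMono f)
    (hg : Tendsto g atTop atTop) (hgf : ∀ᶠ k in atTop, g k ∈ Set.range f) :
    Tendsto g atTop (map f atTop) := by
  have hcomap : comap f atTop = atTop :=
    comap_embedding_atTop (fun _ _ => hf.le_iff_le) fun c => ⟨c, hf.le_apply⟩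
  have hmap : map f atTop = atTop ⊓ 𝓟 (Set.range f) := by
    conv_lhs => rw [← hcomap, map_comap]
  rw [hmap]
  exact tendsto_inf.2 ⟨hg, tendsto_principal.2 hgf⟩

section BolzanoWeierstrass

variable {Ω E : Type*} {m : MeasurableSpace Ω} [PseudoMetricSpace E]
  [MeasurableSpace E] {Y : ℕ → Ω → E}

theorem measurableSet_isBounded_range [SecondCountableTopology E]
    [OpensMeasurableSpace E] (hY : ∀ k, Measurable (Y k)) :
    MeasurableSet {ω | Bornology.IsBounded (Set.range fun k => Y k ω)} := by
  have h : {ω | Bornology.IsBounded (Set.range fun k => Y k ω)} =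
      ⋃ N : ℕ, ⋂ j, ⋂ k, {ω | dist (Y j ω) (Y k ω) ≤ N} := by
    ext ω
    simp only [Metric.isBounded_range_iff, Set.mem_ofPred_eq, Set.mem_iUnion, Set.mem_iInter]
    exact ⟨fun ⟨C, hC⟩ => (exists_nat_ge C).imp fun N hN j k => (hC j k).trans hN,
      fun ⟨N, hN⟩ => ⟨N, hN⟩⟩
  rw [h]
  exact .iUnion fun N => .iInter fun j => .iInter fun k =>
    measurableSet_le ((hY j).dist (hY k)) measurable_const

theorem exists_isRandomSubseq_dist_lt [ProperSpace E] [OpensMeasurableSpace E]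
    (hY : ∀ k, Measurable (Y k))
    (hbdd : ∀ ω, Bornology.IsBounded (Set.range fun k => Y k ω)) {ε : ℝ} (hε : 0 < ε) :
    ∃ τ, IsRandomSubseq m τ ∧ ∀ ω j k, dist (Y (τ j ω) ω) (Y (τ k ω) ω) < ε := by
  classical
  obtain hΩ | hΩ := isEmpty_or_nonempty Ω
  · exact ⟨_, .id m, fun ω => hΩ.elim ω⟩
  have : Nonempty E := hΩ.map (Y 0)
  let q := TopologicalSpace.denseSeq E
  have hmeas : ∀ i k, MeasurableSet {ω | dist (Y k ω) (q i) < ε / 2} := fun i k =>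
    measurableSet_lt ((hY k).dist measurable_const) measurable_const
  have hex : ∀ ω, ∃ i, ∃ᶠ k in atTop, dist (Y k ω) (q i) < ε / 2 := by
    intro ω
    obtain ⟨y, -, hy⟩ := (hbdd ω).isCompact_closure.exists_mapClusterPt_of_frequently
      (l := atTop) (f := fun k => Y k ω)
      (Frequently.of_forall fun k => subset_closure (Set.mem_range_self k))
    obtain ⟨i, hi⟩ := (TopologicalSpace.denseRange_denseSeq E).exists_dist_lt y (half_pos hε)
    exact ⟨i, mapClusterPt_iff_frequently.1 hy _ (Metric.isOpen_ball.mem_nhds hi)⟩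
  let i (ω : Ω) : ℕ := Nat.find (hex ω)
  have hi : Measurable i := measurable_find _ fun i => by
    simp only [frequently_atTop, Set.ofPred_forall, Set.ofPred_exists]
    exact .iInter fun N => .iUnion fun k => (MeasurableSet.const _).inter (hmeas i k)
  obtain ⟨τ, hτ, hτi⟩ := IsRandomSubseq.exists_forall_of_frequently
    (p := fun _ k ω => dist (Y k ω) (q (i ω)) < ε / 2)
    (fun _ k => measurableSet_lt
      ((hY k).dist ((measurable_of_countable q).comp hi)) measurable_const)
    fun _ ω => Nat.find_spec (hex ω)
  refine ⟨τ, hτ, fun ω j k => ?_⟩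
  calc dist (Y (τ j ω) ω) (Y (τ k ω) ω)
      ≤ dist (Y (τ j ω) ω) (q (i ω)) + dist (Y (τ k ω) ω) (q (i ω)) := dist_triangle_right _ _ _
    _ < ε / 2 + ε / 2 := add_lt_add (hτi j ω) (hτi k ω)
    _ = ε := add_halves ε

theorem exists_isRandomSubseq_cauchySeq [ProperSpace E] [OpensMeasurableSpace E]
    (hY : ∀ k, Measurable (Y k))
    (hbdd : ∀ ω, Bornology.IsBounded (Set.range fun k => Y k ω)) :
    ∃ τ, IsRandomSubseq m τ ∧ ∀ ω, CauchySeq fun k => Y (τ k ω) ω := by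
  have refine_dist : ∀ (n : ℕ) (τ : ℕ → Ω → ℕ), IsRandomSubseq m τ → ∃ ρ, IsRandomSubseq m ρ ∧
      ∀ ω j k, dist (Y (τ (ρ j ω) ω) ω) (Y (τ (ρ k ω) ω) ω) < 1 / (n + 1 : ℝ) := fun n τ hτ =>
    exists_isRandomSubseq_dist_lt (fun k => measurable_apply_index hY (hτ.measurable k))
      (fun ω => (hbdd ω).subset (Set.range_comp_subset_range (τ · ω) (Y · ω)))
      Nat.one_div_pos_of_nat
  obtain ⟨σ, hσ, hσQ⟩ := IsRandomSubseq.exists_diagonal (m := fun _ => m) monotone_const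
    (Q := fun n τ => ∀ ω j k, dist (Y (τ j ω) ω) (Y (τ k ω) ω) < 1 / (n + 1 : ℝ))
    (refine_dist 0 _ (.id m)) fun n τ hτ _ => refine_dist (n + 1) τ hτ
  refine ⟨σ, by simpa only [iSup_const] using hσ, fun ω => ?_⟩
  refine cauchySeq_of_le_tendsto_0 (fun n : ℕ => 1 / (n + 1 : ℝ)) (fun j k n hj hk => ?_)
    tendsto_one_div_add_atTop_nhds_zero_nat
  obtain ⟨τ, -, hdist, hrange⟩ := hσQ n
  obtain ⟨j', hj'⟩ := hrange ω j hj
  obtain ⟨k', hk'⟩ := hrange ω k hk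
  simpa only [hj', hk'] using (hdist ω j' k').le

theorem exists_isRandomSubseq_tendsto_of_isBounded [ProperSpace E] [BorelSpace E]
    (hY : ∀ k, Measurable (Y k)) :
    ∃ τ, IsRandomSubseq m τ ∧ ∃ y : Ω → E, Measurable y ∧
      ∀ ω, Bornology.IsBounded (Set.range fun k => Y k ω) →
        Tendsto (fun k => Y (τ k ω) ω) atTop (𝓝 (y ω)) := by
  classical
  let A := {ω | Bornology.IsBounded (Set.range fun k => Y k ω)}
  let Y' (k : ℕ) : Ω → E := A.piecewise (Y k) (Y 0)
  have hY' : ∀ k, Measurable (Y' k) := fun k =>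
    (hY k).piecewise (measurableSet_isBounded_range hY) (hY 0)
  have eq_of_mem : ∀ ω ∈ A, ∀ k, Y' k ω = Y k ω := fun ω hω k => A.piecewise_eq_of_mem _ _ hω
  obtain ⟨τ, hτ, hcauchy⟩ := exists_isRandomSubseq_cauchySeq hY' fun ω => by
    by_cases hω : ω ∈ A
    · simp only [eq_of_mem ω hω]
      exact hω
    · simp only [Y', A.piecewise_eq_of_notMem _ _ hω, Set.range_const,
        Bornology.isBounded_singleton]
  choose y hy using fun ω => cauchySeq_tendsto_of_complete (hcauchy ω)
  refine ⟨τ, hτ, y, ?_, fun ω hω => by simpa only [eq_of_mem ω hω] using hy ω⟩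
  exact measurable_of_tendsto_metrizable
    (fun k => measurable_apply_index hY' (hτ.measurable k)) (tendsto_pi_nhds.2 hy)

end BolzanoWeierstrass

section CondLExp

variable {Ω : Type*} {m m₁ mΩ : MeasurableSpace Ω} {μ : Measure Ω} {Z : ℕ → Ω → ℝ≥0∞}

theorem setLIntegral_apply_index (F : ℕ → Ω → ℝ≥0∞) {σ : Ω → ℕ} (hσ : Measurable σ) {s : Set Ω}
    (hs : MeasurableSet s) :
    ∫⁻ ω in s, F (σ ω) ω ∂μ = ∑' k, ∫⁻ ω in s ∩ σ ⁻¹' {k}, F k ω ∂μ := by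
  have hmeas : ∀ k, MeasurableSet (s ∩ σ ⁻¹' {k}) := fun k =>
    hs.inter (hσ (measurableSet_singleton k))
  have hdisj : Pairwise (Function.onFun Disjoint fun k => s ∩ σ ⁻¹' {k}) := fun j k hjk =>
    ((Set.disjoint_singleton.2 hjk).preimage σ).mono Set.inter_subset_right Set.inter_subset_right
  have hunion : ⋃ k, s ∩ σ ⁻¹' {k} = s := by
    rw [← Set.inter_iUnion, ← Set.preimage_iUnion, Set.iUnion_of_singleton, Set.preimage_univ,
      Set.inter_univ]
  calc ∫⁻ ω in s, F (σ ω) ω ∂μ = ∑' k, ∫⁻ ω in s ∩ σ ⁻¹' {k}, F (σ ω) ω ∂μ := by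
        rw [← lintegral_iUnion hmeas hdisj, hunion]
    _ = ∑' k, ∫⁻ ω in s ∩ σ ⁻¹' {k}, F k ω ∂μ :=
        tsum_congr fun k => setLIntegral_congr_fun (hmeas k) fun ω hω => by
          rw [show σ ω = k from hω.2]

theorem condLExp_apply_index (hm : m ≤ mΩ) [SigmaFinite (μ.trim hm)] (Z : ℕ → Ω → ℝ≥0∞)
    {σ : Ω → ℕ} (hσ : Measurable[m] σ) :
    (fun ω => μ⁻[Z (σ ω)|m] ω) =ᵐ[μ] μ⁻[fun ω => Z (σ ω) ω|m] := by
  refine ae_eq_condLExp hm μ _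
    (measurable_apply_index (fun k => measurable_condLExp m μ (Z k)) hσ) fun s hs => ?_
  rw [setLIntegral_apply_index (fun k => μ⁻[Z k|m]) (hσ.mono hm le_rfl) (hm s hs),
    setLIntegral_apply_index Z (hσ.mono hm le_rfl) (hm s hs)]
  exact tsum_congr fun k =>
    setLIntegral_condLExp hm μ (Z k) (hs.inter (hσ (measurableSet_singleton k)))

theorem ae_liminf_lt_top_of_lintegral_le (hZ : ∀ k, Measurable (Z k)) {C : ℝ≥0∞} (hC : C ≠ ∞)
    (hZC : ∀ k, ∫⁻ ω, Z k ω ∂μ ≤ C) : ∀ᵐ ω ∂μ, liminf (fun k => Z k ω) atTop < ∞ := by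
  refine ae_lt_top (.liminf hZ) (ne_top_of_le_ne_top hC ?_)
  calc ∫⁻ ω, liminf (fun k => Z k ω) atTop ∂μ
      ≤ liminf (fun k => ∫⁻ ω, Z k ω ∂μ) atTop := lintegral_liminf_le hZ
    _ ≤ C := liminf_le_of_frequently_le' (.of_forall hZC)

theorem exists_isRandomSubseq_le_liminf_add_one (hZ : ∀ k, Measurable[m] (Z k)) :
    ∃ ρ, IsRandomSubseq m ρ ∧ ∀ k ω, Z (ρ k ω) ω ≤ liminf (fun j => Z j ω) atTop + 1 := by
  refine IsRandomSubseq.exists_forall_of_frequently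
    (p := fun _ k ω => Z k ω ≤ liminf (fun j => Z j ω) atTop + 1)
    (fun _ k => measurableSet_le (hZ k) ((Measurable.liminf hZ).add_const 1)) fun _ ω => ?_
  obtain htop | htop := eq_or_ne (liminf (fun j => Z j ω) atTop) ∞
  · exact .of_forall fun k => by simp [htop]
  · exact (frequently_lt_of_liminf_lt (h := ENNReal.lt_add_right htop one_ne_zero)).mono
      fun k hk => hk.le

/-- The conditional expectations given `m` of the variables `Z k` are almost surely bounded in `k`.
This is the form of boundedness that survives passing to an `m`-measurable random subsequence,
whereas boundedness in probability does not. -/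
def CondLExpBounded (m : MeasurableSpace Ω) {_ : MeasurableSpace Ω} (μ : Measure Ω)
    (Z : ℕ → Ω → ℝ≥0∞) : Prop :=
  ∀ᵐ ω ∂μ, ⨆ k, μ⁻[Z k|m] ω < ∞

theorem condLExpBounded_bot [IsFiniteMeasure μ] {C : ℝ≥0∞} (hC : C ≠ ∞)
    (hZC : ∀ k, ∫⁻ ω, Z k ω ∂μ ≤ C) : CondLExpBounded ⊥ μ Z := by
  obtain rfl | hμ := eq_zero_or_neZero μ
  · exact ae_zero.le trivial
  filter_upwards [ae_all_iff.2 fun k => condLExp_bot_ae_eq μ (Z k)] with ω hω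
  have hle : ∀ k, μ⁻[Z k|⊥] ω ≤ (μ Set.univ)⁻¹ * C := fun k => by
    rw [hω k, smul_eq_mul]
    gcongr
    exact hZC k
  exact (iSup_le hle).trans_lt (ENNReal.mul_lt_top
    (ENNReal.inv_lt_top.2 (NeZero.pos _)) hC.lt_top)

namespace CondLExpBounded

theorem comp (h : CondLExpBounded m μ Z) (hm : m ≤ mΩ) [SigmaFinite (μ.trim hm)]
    {ρ : ℕ → Ω → ℕ} (hρ : ∀ k, Measurable[m] (ρ k)) :
    CondLExpBounded m μ fun k ω => Z (ρ k ω) ω := by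
  filter_upwards [h, ae_all_iff.2 fun k => condLExp_apply_index hm Z (hρ k)] with ω hω hρω
  simp only [← hρω]
  exact (iSup_le fun k => le_iSup (fun j => μ⁻[Z j|m] ω) (ρ k ω)).trans_lt hω

theorem ae_liminf_condLExp_lt_top [IsFiniteMeasure μ] (h : CondLExpBounded m μ Z) (hm : m ≤ m₁)
    (hm₁ : m₁ ≤ mΩ) : ∀ᵐ ω ∂μ, liminf (fun k => μ⁻[Z k|m₁] ω) atTop < ∞ := by
  let A (j : ℕ) : Set Ω := {ω | ⨆ k, μ⁻[Z k|m] ω ≤ j}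
  have hA : ∀ j, MeasurableSet[m] (A j) := fun j =>
    measurableSet_le (Measurable.iSup fun k => measurable_condLExp m μ (Z k)) measurable_const
  have lintegral_le : ∀ j k, ∫⁻ ω in A j, μ⁻[Z k|m₁] ω ∂μ ≤ j * μ (A j) := fun j k =>
    calc ∫⁻ ω in A j, μ⁻[Z k|m₁] ω ∂μ = ∫⁻ ω in A j, μ⁻[Z k|m] ω ∂μ := by
          rw [setLIntegral_condLExp hm₁ μ _ (hm _ (hA j)),
            setLIntegral_condLExp (hm.trans hm₁) μ _ (hA j)]
      _ ≤ ∫⁻ _ in A j, (j : ℝ≥0∞) ∂μ :=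
          setLIntegral_mono measurable_const fun ω hω =>
            (le_iSup (fun k => μ⁻[Z k|m] ω) k).trans hω
      _ = j * μ (A j) := setLIntegral_const _ _
  have lt_top_on : ∀ j, ∀ᵐ ω ∂μ, ω ∈ A j → liminf (fun k => μ⁻[Z k|m₁] ω) atTop < ∞ := fun j =>
    (ae_restrict_iff' ((hm.trans hm₁) _ (hA j))).1 <| ae_liminf_lt_top_of_lintegral_le
      (fun k => measurable_condLExp' m₁ μ (Z k))
      (ENNReal.mul_ne_top (ENNReal.natCast_ne_top j) (measure_ne_top μ _)) (lintegral_le j)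
  filter_upwards [h, ae_all_iff.2 lt_top_on] with ω hω hlt
  obtain ⟨j, hj⟩ := ENNReal.exists_nat_gt hω.ne
  exact hlt j hj.le

theorem exists_isRandomSubseq [IsFiniteMeasure μ] (h : CondLExpBounded m μ Z) (hm : m ≤ m₁)
    (hm₁ : m₁ ≤ mΩ) :
    ∃ ρ, IsRandomSubseq m₁ ρ ∧ CondLExpBounded m₁ μ fun k ω => Z (ρ k ω) ω := by
  obtain ⟨ρ, hρ, hle⟩ := exists_isRandomSubseq_le_liminf_add_one
    fun k => measurable_condLExp m₁ μ (Z k)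
  refine ⟨ρ, hρ, ?_⟩
  filter_upwards [h.ae_liminf_condLExp_lt_top hm hm₁,
    ae_all_iff.2 fun k => condLExp_apply_index hm₁ Z (hρ.measurable k)] with ω hω hρω
  simp only [← hρω]
  exact (iSup_le fun k => hle k ω).trans_lt (ENNReal.add_lt_top.2 ⟨hω, ENNReal.one_lt_top⟩)

theorem ae_isBounded_range {E : Type*} [NormedAddCommGroup E] [MeasurableSpace E]
    [OpensMeasurableSpace E] (h : CondLExpBounded m μ Z) (hm : m ≤ mΩ) [SigmaFinite (μ.trim hm)]
    {φ : ℝ → ℝ≥0∞} (hφ : Measurable φ) (hφ_top : Tendsto φ atTop (𝓝 ∞)) {X : ℕ → Ω → E}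
    (hX : ∀ k, Measurable[m] (X k)) (hXZ : ∀ k ω, φ ‖X k ω‖ ≤ Z k ω) :
    ∀ᵐ ω ∂μ, Bornology.IsBounded (Set.range fun k => X k ω) := by
  have hle : ∀ k, ∀ᵐ ω ∂μ, φ ‖X k ω‖ ≤ μ⁻[Z k|m] ω := fun k => by
    have hφX : Measurable[m] fun ω => φ ‖X k ω‖ := hφ.comp (continuous_norm.measurable.comp (hX k))
    have hmono : μ⁻[fun ω => φ ‖X k ω‖|m] ≤ᵐ[μ] μ⁻[Z k|m] := condLExp_mono (.of_forall (hXZ k))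
    rwa [condLExp_eq_self hm μ hφX] at hmono
  filter_upwards [h, ae_all_iff.2 hle] with ω hω hleω
  obtain ⟨R, hR⟩ := eventually_atTop.1 (hφ_top.eventually_const_lt hω)
  refine isBounded_iff_forall_norm_le.2 ⟨R, Set.forall_mem_range.2 fun k => ?_⟩
  by_contra! hlt
  exact ((hR _ hlt.le).trans_le (hleω k)).not_ge (le_iSup (fun j => μ⁻[Z j|m] ω) k)

theorem exists_isRandomSubseq_tendsto {E : Type*} [NormedAddCommGroup E] [ProperSpace E]
    [MeasurableSpace E] [BorelSpace E] [IsFiniteMeasure μ] (h : CondLExpBounded m μ Z)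
    (hm : m ≤ m₁) (hm₁ : m₁ ≤ mΩ) {φ : ℝ → ℝ≥0∞} (hφ : Measurable φ)
    (hφ_top : Tendsto φ atTop (𝓝 ∞)) {X : ℕ → Ω → E} (hX : ∀ k, Measurable[m₁] (X k))
    (hXZ : ∀ k ω, φ ‖X k ω‖ ≤ Z k ω) :
    ∃ ρ, IsRandomSubseq m₁ ρ ∧ CondLExpBounded m₁ μ (fun k ω => Z (ρ k ω) ω) ∧
      ∃ x : Ω → E, Measurable[m₁] x ∧
        ∀ᵐ ω ∂μ, Tendsto (fun k => X (ρ k ω) ω) atTop (𝓝 (x ω)) := by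
  obtain ⟨ρ, hρ, hZρ⟩ := h.exists_isRandomSubseq hm hm₁
  have hXρ : ∀ k, Measurable[m₁] fun ω => X (ρ k ω) ω := fun k =>
    measurable_apply_index hX (hρ.measurable k)
  obtain ⟨ρ', hρ', x, hx, hlim⟩ := exists_isRandomSubseq_tendsto_of_isBounded hXρ
  refine ⟨_, hρ.comp hρ', hZρ.comp hm₁ hρ'.measurable, x, hx, ?_⟩
  filter_upwards [hZρ.ae_isBounded_range hm₁ hφ hφ_top hXρ fun k ω => hXZ _ ω] with ω hω
  exact hlim ω hω

end CondLExpBounded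

end CondLExp

section BoundedInMeasure

variable {Ω E F ι : Type*} {mΩ : MeasurableSpace Ω} {μ : Measure Ω}

/-- Boundedness of a family of functions in the topology of convergence in measure; for a
probability measure this is boundedness in probability. -/
def BoundedInMeasure [Norm E] (μ : Measure Ω) (X : ι → Ω → E) : Prop :=
  ∀ ε : ℝ≥0∞, 0 < ε → ∃ M : ℝ, ∀ i, μ {ω | M ≤ ‖X i ω‖} < ε

theorem boundedInMeasure_of_forall_real [Norm E] {X : ι → Ω → E}
    (h : ∀ ε : ℝ, 0 < ε → ∃ M : ℝ, ∀ i, μ {ω | M ≤ ‖X i ω‖} < ENNReal.ofReal ε) :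
    BoundedInMeasure μ X := by
  intro ε hε
  obtain ⟨δ, hδ, hδε⟩ := ENNReal.lt_iff_exists_nnreal_btwn.1 hε
  obtain ⟨M, hM⟩ := h δ (ENNReal.coe_pos.1 hδ)
  exact ⟨M, fun i => (hM i).trans (by rwa [ENNReal.ofReal_coe_nnreal])⟩

theorem BoundedInMeasure.mono_norm [Norm E] [Norm F] {X : ι → Ω → E} {Y : ι → Ω → F}
    (hY : BoundedInMeasure μ Y) (hXY : ∀ i ω, ‖X i ω‖ ≤ ‖Y i ω‖) : BoundedInMeasure μ X :=
  fun ε hε => (hY ε hε).imp fun _ hM i =>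
    (measure_mono fun ω hω => hω.trans (hXY i ω)).trans_lt (hM i)

variable [NormedAddCommGroup E] [MeasurableSpace E] [OpensMeasurableSpace E]

theorem BoundedInMeasure.exists_lintegral_le {X : ι → Ω → E} (hX : ∀ i, Measurable (X i))
    (h : BoundedInMeasure μ X) {δ : ℝ≥0∞} (hδ : δ ≠ 0) :
    ∃ φ : ℝ → ℝ≥0∞, Measurable φ ∧ Tendsto φ atTop (𝓝 ∞) ∧
      ∀ i, ∫⁻ ω, φ ‖X i ω‖ ∂μ ≤ δ := by
  obtain ⟨ε, hε, hεδ⟩ := ENNReal.exists_pos_sum_of_countable' hδ ℕ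
  choose M hM using fun j => h (ε j) (hε j)
  let φ (r : ℝ) : ℝ≥0∞ := ∑' j, (Set.Ici (M j)).indicator 1 r
  have hind : ∀ j, Measurable ((Set.Ici (M j)).indicator (1 : ℝ → ℝ≥0∞)) := fun j =>
    measurable_one.indicator measurableSet_Ici
  refine ⟨φ, .tsum hind, ENNReal.tendsto_nhds_top_iff_nat.2 fun n => ?_, fun i => ?_⟩
  · filter_upwards [(Finset.range (n + 1)).eventually_all.2 fun j _ => eventually_ge_atTop (M j)]
      with r hr
    calc (n : ℝ≥0∞) < (n + 1 : ℕ) := by exact_mod_cast n.lt_succ_self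
      _ = ∑ j ∈ Finset.range (n + 1), (Set.Ici (M j)).indicator 1 r := by
          rw [Finset.sum_congr rfl fun j hj => Set.indicator_of_mem (Set.mem_Ici.2 (hr j hj)) _]
          simp
      _ ≤ φ r := ENNReal.sum_le_tsum _
  · calc ∫⁻ ω, φ ‖X i ω‖ ∂μ = ∑' j, ∫⁻ ω, (Set.Ici (M j)).indicator 1 ‖X i ω‖ ∂μ :=
          lintegral_tsum fun j => ((hind j).comp (hX i).norm).aemeasurable
      _ = ∑' j, μ {ω | M j ≤ ‖X i ω‖} := tsum_congr fun j =>
          lintegral_indicator_one (measurableSet_le measurable_const (hX i).norm)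
      _ ≤ ∑' j, ε j := ENNReal.tsum_le_tsum fun j => (hM j i).le
      _ ≤ δ := hεδ.le

theorem BoundedInMeasure.exists_forall_le_lintegral_le {κ : Type*} [Countable κ]
    {X : ι → κ → Ω → E} (hX : ∀ i t, Measurable (X i t))
    (h : ∀ t, BoundedInMeasure μ fun i => X i t) {δ : ℝ≥0∞} (hδ : δ ≠ 0) :
    ∃ (φ : κ → ℝ → ℝ≥0∞) (Z : ι → Ω → ℝ≥0∞),
      (∀ t, Measurable (φ t)) ∧ (∀ t, Tendsto (φ t) atTop (𝓝 ∞)) ∧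
      (∀ i t ω, φ t ‖X i t ω‖ ≤ Z i ω) ∧ ∀ i, ∫⁻ ω, Z i ω ∂μ ≤ δ := by
  obtain ⟨ε, hε, hεδ⟩ := ENNReal.exists_pos_sum_of_countable' hδ κ
  choose φ hφ hφ_top hint using fun t => (h t).exists_lintegral_le (fun i => hX i t) (hε t).ne'
  refine ⟨φ, fun i ω => ∑' t, φ t ‖X i t ω‖, hφ, hφ_top, fun i t ω => ENNReal.le_tsum t,
    fun i => ?_⟩
  calc ∫⁻ ω, ∑' t, φ t ‖X i t ω‖ ∂μ = ∑' t, ∫⁻ ω, φ t ‖X i t ω‖ ∂μ :=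
        lintegral_tsum fun t => ((hφ t).comp (hX i t).norm).aemeasurable
    _ ≤ ∑' t, ε t := ENNReal.tsum_le_tsum fun t => hint t i
    _ ≤ δ := hεδ.le

end BoundedInMeasure

theorem exists_isRandomSubseq_tendsto_of_boundedInMeasure {Ω E : Type*} {mΩ : MeasurableSpace Ω}
    {μ : Measure Ω} [IsFiniteMeasure μ] [NormedAddCommGroup E] [ProperSpace E]
    [MeasurableSpace E] [BorelSpace E] (ℱ : Filtration ℕ mΩ) {X : ℕ → ℕ → Ω → E}
    (hX : ∀ k, Adapted ℱ (X k)) (hbdd : ∀ n, BoundedInMeasure μ fun k => X k n) :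
    ∃ σ, IsRandomSubseq (⨆ n, ℱ n) σ ∧ ∃ x : ℕ → Ω → E, Adapted ℱ x ∧
      ∀ᵐ ω ∂μ, ∀ n, Tendsto (fun k => X (σ k ω) n ω) atTop (𝓝 (x n ω)) := by
  obtain ⟨φ, Z, hφ, hφ_top, hXZ, hZ⟩ := BoundedInMeasure.exists_forall_le_lintegral_le
    (fun k n => (hX k n).mono (ℱ.le n) le_rfl) hbdd one_ne_zero
  obtain ⟨σ, hσ, hστ⟩ := IsRandomSubseq.exists_diagonal ℱ.mono'
    (Q := fun n τ => CondLExpBounded (ℱ n) μ (fun k ω => Z (τ k ω) ω) ∧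
      ∃ x : Ω → E, Measurable[ℱ n] x ∧
        ∀ᵐ ω ∂μ, Tendsto (fun k => X (τ k ω) n ω) atTop (𝓝 (x ω)))
    ((condLExpBounded_bot ENNReal.one_ne_top hZ).exists_isRandomSubseq_tendsto bot_le (ℱ.le 0)
      (hφ 0) (hφ_top 0) (fun k => hX k 0) fun k => hXZ k 0)
    fun n τ hτ ⟨hZτ, _⟩ => hZτ.exists_isRandomSubseq_tendsto (ℱ.mono n.le_succ) (ℱ.le (n + 1))
      (hφ (n + 1)) (hφ_top (n + 1))
      (fun k => measurable_apply_index (fun j => hX j (n + 1))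
        ((hτ.mono (ℱ.mono n.le_succ)).measurable k))
      fun k ω => hXZ _ (n + 1) ω
  choose τ hτ hτQ hrange using hστ
  choose x hx hlim using fun n => (hτQ n).2
  refine ⟨σ, hσ, x, hx, ae_all_iff.2 fun n => (hlim n).mono fun ω hω => ?_⟩
  have hστ : Tendsto (fun k => σ k ω) atTop (map (fun k => τ n k ω) atTop) :=
    tendsto_map_atTop_of_eventually_mem_range ((hτ n).strictMono ω) (hσ.tendsto_atTop ω)
      (eventually_atTop.2 ⟨n, hrange n ω⟩)
  exact (tendsto_map'_iff (f := fun k => X k n ω).2 hω).comp hστ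

theorem stmt9_general {Ω E ι : Type*} [Preorder ι] [OrderBot ι] [SuccOrder ι]
    [IsSuccArchimedean ι] {mΩ : MeasurableSpace Ω} {μ : Measure Ω} [IsFiniteMeasure μ]
    [NormedAddCommGroup E] [ProperSpace E] [MeasurableSpace E] [BorelSpace E]
    (ℱ : Filtration ι mΩ) {X : ℕ → ι → Ω → E} (hX : ∀ k, Adapted ℱ (X k))
    (hbdd : ∀ t, BoundedInMeasure μ fun k => X k t) :
    ∃ τ, IsRandomSubseq (⨆ t, ℱ t) τ ∧ ∃ x : ι → Ω → E, Adapted ℱ x ∧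
      ∀ᵐ ω ∂μ, ∀ t, Tendsto (fun k => X (τ k ω) t ω) atTop (𝓝 (x t ω)) := by
  let time (n : ℕ) : ι := Order.succ^[n] ⊥
  have time_mono : Monotone time := monotone_nat_of_le_succ fun n => by
    simp only [time, Function.iterate_succ_apply']
    exact Order.le_succ _
  have time_surj : Function.Surjective time := fun t => (bot_le (a := t)).exists_succ_iterate
  choose index time_index using time_surj
  obtain ⟨τ, hτ, x, hx, hlim⟩ := exists_isRandomSubseq_tendsto_of_boundedInMeasure
    ⟨fun n => ℱ (time n), ℱ.mono'.comp time_mono, fun n => ℱ.le (time n)⟩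
    (fun k n => hX k (time n)) fun n => hbdd (time n)
  refine ⟨τ, hτ.mono (iSup_le fun n => le_iSup ℱ (time n)), fun t => x (index t), fun t => ?_,
    hlim.mono fun ω hω t => by simpa only [time_index] using hω (index t)⟩
  have hxt : Measurable[ℱ (time (index t))] (x (index t)) := hx (index t)
  rwa [time_index] at hxt

/-- from a sequence of adapted strategies that is bounded in probability
one can extract a measurable, strictly increasing random subsequence converging almost
surely to an adapted strategy. -/
theorem stmt9 {Ω : Type*} {mΩ : MeasurableSpace Ω} (P : Measure Ω) [IsProbabilityMeasure P]
    (T d : ℕ) (hT : 1 ≤ T) (hd : 1 ≤ d)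
    (ℱ : Fin T → MeasurableSpace Ω) (hℱmono : Monotone ℱ) (hℱle : ∀ t, ℱ t ≤ mΩ)
    (ϑn : ℕ → Ω → Fin T → Fin d → ℝ) (hadapted : ∀ k, AdaptedStrat ℱ (ϑn k))
    -- bounded in probability
    (hbdd : ∀ ε : ℝ, 0 < ε → ∃ M : ℝ, 0 < M ∧
      ∀ k, P {ω | M ≤ ‖ϑn k ω‖} < ENNReal.ofReal ε) :
    ∃ τ : ℕ → Ω → ℕ,
      (∀ k, Measurable (τ k)) ∧
      (∀ k ω, τ k ω < τ (k + 1) ω) ∧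
      ∃ ϑ : Ω → Fin T → Fin d → ℝ, AdaptedStrat ℱ ϑ ∧
        ∀ᵐ ω ∂P, Tendsto (fun k => ϑn (τ k ω) ω) atTop (nhds (ϑ ω)) := by
  have : NeZero T := ⟨Nat.one_le_iff_ne_zero.1 hT⟩
  let 𝒢 : Filtration (Fin T) mΩ := ⟨ℱ, hℱmono, hℱle⟩
  have hbounded : BoundedInMeasure P ϑn :=
    boundedInMeasure_of_forall_real fun ε hε => (hbdd ε hε).imp fun _ h => h.2
  obtain ⟨τ, hτ, x, hx, hlim⟩ := stmt9_general 𝒢 (X := fun k t ω => ϑn k ω t) hadapted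
    fun t => hbounded.mono_norm fun k ω => norm_le_pi_norm _ t
  exact ⟨τ, (hτ.mono (iSup_le 𝒢.le)).measurable, fun k ω => hτ.strictMono ω k.lt_succ_self,
    fun ω t => x t ω, hx, hlim.mono fun ω => tendsto_pi_nhds.2⟩

end
end
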